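/- If the semicascade (Ω,φ) is tame and the proximality relation P(Ω,φ) is transitive, then for every x ∈ C(Ω,ℝ) and every finite signed Borel measure μ on Ω the Cesàro averages (1/n) Σ_{j=0}^{n−1} ∫ x∘φ^j dμ converge as n → ∞. -/

import Mathlib

open MeasureTheory Filter Topology

/-- The pairing `⟨f, μ⟩ = ∫ f dμ` of a function with a finite signed Borel measure,
defined via the Jordan decomposition of the signed measure. -/
noncomputable def spair {Ω : Type*} [MeasurableSpace Ω] (f : Ω → ℝ) (μ : SignedMeasure Ω) : ℝ :=
  (∫ ω, f ω ∂μ.toJordanDecomposition.posPart) - (∫ ω, f ω ∂μ.toJordanDecomposition.negPart)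

/-- The weak* topology on the space `X*` of finite signed Borel measures, i.e. the topology
of convergence of the pairings with all continuous functions `x ∈ C(Ω, ℝ)`. With this topology
on the codomain, the product topology on `SignedMeasure Ω → SignedMeasure Ω` is precisely the
weak* operator topology (pointwise convergence with `X*` in its weak* topology). -/
noncomputable instance weakStarTopology {Ω : Type*} [TopologicalSpace Ω] [MeasurableSpace Ω] :
    TopologicalSpace (SignedMeasure Ω) :=
  TopologicalSpace.induced (fun μ => fun x : C(Ω, ℝ) => spair (⇑x) μ) inferInstance

/-- The operator `V : X* → X*`, pushforward by `φ`: `(Vμ)(e) = μ(φ⁻¹ e)`. -/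
noncomputable def Vop {Ω : Type*} [MeasurableSpace Ω] (φ : Ω → Ω) :
    SignedMeasure Ω → SignedMeasure Ω :=
  fun μ => μ.map φ

/-- The Dirac measure at `ω`, as a signed measure. -/
noncomputable def diracSM {Ω : Type*} [MeasurableSpace Ω] (ω : Ω) : SignedMeasure Ω :=
  (Measure.dirac ω).toSignedMeasure

/-- `Γ(Ω,φ)`: the closure of `{Vⁿ : n ≥ 0}` in the weak* operator topology. -/
def GammaSG {Ω : Type*} [TopologicalSpace Ω] [MeasurableSpace Ω] (φ : Ω → Ω) :
    Set (SignedMeasure Ω → SignedMeasure Ω) :=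
  closure (Set.range fun n : ℕ => (Vop φ)^[n])

/-- `G(Ω,φ)`: the closure of the convex hull of `{Vⁿ : n ≥ 0}` in the weak* operator topology. -/
def GSG {Ω : Type*} [TopologicalSpace Ω] [MeasurableSpace Ω] (φ : Ω → Ω) :
    Set (SignedMeasure Ω → SignedMeasure Ω) :=
  closure (convexHull ℝ (Set.range fun n : ℕ => (Vop φ)^[n]))

/-- The kernel `L = {Q ∈ G(Ω,φ) : V ∘ Q = Q}` of the semigroup `G(Ω,φ)`. -/
def Lker {Ω : Type*} [TopologicalSpace Ω] [MeasurableSpace Ω] (φ : Ω → Ω) :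
    Set (SignedMeasure Ω → SignedMeasure Ω) :=
  {Q ∈ GSG φ | Vop φ ∘ Q = Q}

/-- The Ellis enveloping semigroup `E(Ω,φ)`: the closure of the iterates `{φⁿ : n ≥ 0}`
in the product topology (pointwise convergence) on `Ω → Ω`. -/
def EllisE {Ω : Type*} [TopologicalSpace Ω] (φ : Ω → Ω) : Set (Ω → Ω) :=
  closure (Set.range fun n : ℕ => φ^[n])

/-- `E_b(Ω,φ)`: the smallest set of self-maps of `Ω` containing the iterates `{φⁿ : n ≥ 0}`
and sequentially closed under pointwise convergence. -/
inductive Eb {Ω : Type*} [TopologicalSpace Ω] (φ : Ω → Ω) : (Ω → Ω) → Prop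
  | iterate (n : ℕ) : Eb φ φ^[n]
  | lim (p : ℕ → Ω → Ω) (q : Ω → Ω) (hp : ∀ k, Eb φ (p k))
      (hq : ∀ ω, Tendsto (fun k => p k ω) atTop (𝓝 (q ω))) : Eb φ q

/-- `E₁(Ω,φ)`: the set of pointwise limits of sequences of iterates `φ^{n_k}`. -/
def E1SG {Ω : Type*} [TopologicalSpace Ω] (φ : Ω → Ω) : Set (Ω → Ω) :=
  {p | ∃ n : ℕ → ℕ, ∀ ω, Tendsto (fun k => φ^[n k] ω) atTop (𝓝 (p ω))}

/-- An operator `P ∈ Γ(Ω,φ)` with `p = πP` is regular if `p` is Borel measurable and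
`(Pμ)(e) = μ(p⁻¹ e)` for every Borel probability measure `μ` and Borel set `e`. -/
def RegularOperator {Ω : Type*} [TopologicalSpace Ω] [MeasurableSpace Ω]
    (P : SignedMeasure Ω → SignedMeasure Ω) (p : Ω → Ω) : Prop :=
  Measurable p ∧ ∀ (μ : Measure Ω) [IsProbabilityMeasure μ],
    ∀ e : Set Ω, MeasurableSet e → P μ.toSignedMeasure e = (μ (p ⁻¹' e)).toReal

/-- A minimal set of the semicascade `(Ω,φ)`: a nonempty closed `φ`-invariant set containing
no proper nonempty closed `φ`-invariant subset. -/
def IsMinimalSet {Ω : Type*} [TopologicalSpace Ω] (φ : Ω → Ω) (m : Set Ω) : Prop :=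
  m.Nonempty ∧ IsClosed m ∧ Set.MapsTo φ m m ∧
    ∀ m' ⊆ m, m'.Nonempty → IsClosed m' → Set.MapsTo φ m' m' → m' = m

/-- The orbit closure of a point `ω`: the closure of the trajectory `{φⁿ ω : n ≥ 0}`. -/
def orbitClosure {Ω : Type*} [TopologicalSpace Ω] (φ : Ω → Ω) (ω : Ω) : Set Ω :=
  closure (Set.range fun n : ℕ => φ^[n] ω)

/-- A `φ`-ergodic measure: a `φ`-invariant Borel probability measure `μ` such that
`μ(e) ∈ {0,1}` for every Borel set `e` with `φ⁻¹ e = e`. -/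
def IsErgodicMeasure {Ω : Type*} [MeasurableSpace Ω] (φ : Ω → Ω) (μ : Measure Ω) : Prop :=
  IsProbabilityMeasure μ ∧ (∀ e : Set Ω, MeasurableSet e → μ (φ ⁻¹' e) = μ e) ∧
    (∀ e : Set Ω, MeasurableSet e → φ ⁻¹' e = e → μ e = 0 ∨ μ e = 1)

/-- The support of a Borel measure: the smallest closed set of full measure
(the intersection of all closed sets of full measure). -/
def msupp {Ω : Type*} [TopologicalSpace Ω] [MeasurableSpace Ω] (μ : Measure Ω) : Set Ω :=
  ⋂₀ {s : Set Ω | IsClosed s ∧ μ sᶜ = 0}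

/-- The semicascade `(Ω,φ)` is tame: for every continuous `x` and every strictly increasing
sequence `n(1) < n(2) < ⋯`, the infimum over finitely supported real coefficients `a` with
`Σ|aₖ| = 1` of the sup-norms `‖Σₖ aₖ · (x ∘ φ^{n(k)})‖` is `0`. -/
def Tame {Ω : Type*} [TopologicalSpace Ω] [CompactSpace Ω] (φ : Ω → Ω)
    (hφ : Continuous φ) : Prop :=
  ∀ (x : C(Ω, ℝ)) (n : ℕ → ℕ), StrictMono n →
    sInf {r : ℝ | ∃ a : ℕ →₀ ℝ, (∑ k ∈ a.support, |a k|) = 1 ∧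
      r = ‖∑ k ∈ a.support, a k • x.comp ⟨φ^[n k], hφ.iterate (n k)⟩‖} = 0

/-- Points `a, b` are proximal: `inf_{n ≥ 0} d(φⁿ a, φⁿ b) = 0`. -/
def Proximal {Ω : Type*} [PseudoMetricSpace Ω] (φ : Ω → Ω) (a b : Ω) : Prop :=
  (⨅ n : ℕ, dist (φ^[n] a) (φ^[n] b)) = 0

lemma aux_tree {Ω : Type*} (big : Set Ω → Prop) (F : Filter ℕ) [F.NeBot] (hF : F ≤ atTop)
    (A B : ℕ → Set Ω)
    (h : ∀ W, big W → ∀ᶠ n in F, big (W ∩ A n) ∧ big (W ∩ B n)) (D : Set Ω) (hD : big D) :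
    ∃ n : ℕ → ℕ, StrictMono n ∧ ∀ (K : ℕ) (σ : ℕ → Bool), ∃ W, big W ∧ W ⊆ D ∧
      ∀ k < K, (σ k = true → W ⊆ A (n k)) ∧ (σ k = false → W ⊆ B (n k)) := by
  classical
  let St := {p : ℕ × Set (Set Ω) // p.2.Finite ∧ ∀ W ∈ p.2, big W}
  have step : ∀ s : St, ∃ s' : St, s.1.1 < s'.1.1 ∧
      ∀ W ∈ s.1.2, W ∩ A s'.1.1 ∈ s'.1.2 ∧ W ∩ B s'.1.1 ∈ s'.1.2 := by
    rintro ⟨⟨N, 𝒲⟩, hfin, hbig⟩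
    have h1 : ∀ᶠ n in F, ∀ W ∈ 𝒲, big (W ∩ A n) ∧ big (W ∩ B n) :=
      (Filter.eventually_all_finite hfin).2 fun W hW => h W (hbig W hW)
    have h2 : ∀ᶠ n in F, N < n := hF (eventually_gt_atTop N)
    obtain ⟨n, hn1, hn2⟩ := (h1.and h2).exists
    refine ⟨⟨⟨n, (fun W => W ∩ A n) '' 𝒲 ∪ (fun W => W ∩ B n) '' 𝒲⟩,
      (hfin.image _).union (hfin.image _), ?_⟩, hn2, ?_⟩
    · rintro W (⟨V, hV, rfl⟩ | ⟨V, hV, rfl⟩)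
      · exact (hn1 V hV).1
      · exact (hn1 V hV).2
    · intro W hW
      exact ⟨Or.inl ⟨W, hW, rfl⟩, Or.inr ⟨W, hW, rfl⟩⟩
  choose next hlt hnext using step
  let s0 : St := ⟨⟨0, {D}⟩, Set.finite_singleton D, by rintro W rfl; exact hD⟩
  let s : ℕ → St := fun k => Nat.rec s0 (fun _ s => next s) k
  have hs : ∀ k, s (k + 1) = next (s k) := fun k => rfl
  refine ⟨fun k => (s (k + 1)).1.1, strictMono_nat_of_lt_succ fun k => ?_, ?_⟩
  · rw [hs (k + 1)]; exact hlt _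
  · intro K σ
    suffices H : ∃ W ∈ (s K).1.2, W ⊆ D ∧
        ∀ k < K, (σ k = true → W ⊆ A (s (k + 1)).1.1) ∧
          (σ k = false → W ⊆ B (s (k + 1)).1.1) by
      obtain ⟨W, hW, h1, h2⟩ := H
      exact ⟨W, (s K).2.2 W hW, h1, h2⟩
    induction K with
    | zero => exact ⟨D, rfl, subset_rfl, by simp⟩
    | succ K ih =>
      obtain ⟨W, hW, hWD, hWk⟩ := ih
      have hn := hnext (s K) W hW
      rw [← hs] at hn
      cases hσ : σ K with
      | true =>
        refine ⟨_, hn.1, Set.inter_subset_left.trans hWD, fun k hk => ?_⟩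
        rcases Nat.lt_succ_iff_lt_or_eq.1 hk with hk | rfl
        · exact ⟨fun h => Set.inter_subset_left.trans ((hWk k hk).1 h),
            fun h => Set.inter_subset_left.trans ((hWk k hk).2 h)⟩
        · exact ⟨fun _ => Set.inter_subset_right, fun h => by simp [hσ] at h⟩
      | false =>
        refine ⟨_, hn.2, Set.inter_subset_left.trans hWD, fun k hk => ?_⟩
        rcases Nat.lt_succ_iff_lt_or_eq.1 hk with hk | rfl
        · exact ⟨fun h => Set.inter_subset_left.trans ((hWk k hk).1 h),
            fun h => Set.inter_subset_left.trans ((hWk k hk).2 h)⟩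
        · exact ⟨fun h => by simp [hσ] at h, fun _ => Set.inter_subset_right⟩

/-- The iterate `x ∘ φ^n` as a continuous map. -/
def xit {Ω : Type*} [TopologicalSpace Ω] (φ : Ω → Ω) (hφ : Continuous φ) (x : C(Ω, ℝ)) (n : ℕ) :
    C(Ω, ℝ) := x.comp ⟨φ^[n], hφ.iterate n⟩

lemma aux_no_indep {Ω : Type*} [TopologicalSpace Ω] [CompactSpace Ω] (φ : Ω → Ω)
    (hφ : Continuous φ) (htame : Tame φ hφ) (x : C(Ω, ℝ)) (n : ℕ → ℕ) (hn : StrictMono n)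
    {α β : ℝ} (hαβ : α < β)
    (h : ∀ (K : ℕ) (σ : ℕ → Bool), ∃ t, ∀ k < K, (σ k = true → β < x (φ^[n k] t)) ∧
      (σ k = false → x (φ^[n k] t) < α)) : False := by
  have ht := htame x n hn
  have hlow : ∀ r ∈ {r : ℝ | ∃ a : ℕ →₀ ℝ, (∑ k ∈ a.support, |a k|) = 1 ∧
      r = ‖∑ k ∈ a.support, a k • x.comp ⟨φ^[n k], hφ.iterate (n k)⟩‖}, (β - α) / 2 ≤ r := by
    rintro r ⟨a, ha, rfl⟩
    set f : C(Ω, ℝ) := ∑ k ∈ a.support, a k • x.comp ⟨φ^[n k], hφ.iterate (n k)⟩ with hf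
    obtain ⟨K, hK⟩ : ∃ K, ∀ k ∈ a.support, k < K := by
      refine ⟨a.support.sup id + 1, fun k hk => ?_⟩
      exact Nat.lt_succ_of_le (Finset.le_sup (f := id) hk)
    obtain ⟨t, ht⟩ := h K (fun k => decide (0 ≤ a k))
    obtain ⟨s, hs⟩ := h K (fun k => decide (a k < 0))
    have hfe : ∀ u, f u = ∑ k ∈ a.support, a k * x (φ^[n k] u) := by
      intro u
      simp [hf, ContinuousMap.sum_apply]
    have h1 : β - α ≤ f t - f s := by
      rw [hfe, hfe, ← Finset.sum_sub_distrib]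
      calc β - α = ∑ k ∈ a.support, |a k| * (β - α) := by rw [← Finset.sum_mul, ha, one_mul]
        _ ≤ _ := by
          refine Finset.sum_le_sum fun k hk => ?_
          have h1 := ht k (hK k hk)
          have h2 := hs k (hK k hk)
          rcases le_or_gt 0 (a k) with h0 | h0
          · have h3 := h1.1 (by simpa using h0)
            have h4 := h2.2 (by simpa using h0)
            rw [abs_of_nonneg h0]; nlinarith
          · have h3 := h1.2 (by simpa using h0)
            have h4 := h2.1 (by simpa using h0)
            rw [abs_of_neg h0]; nlinarith
    have h2 := f.norm_coe_le_norm t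
    have h3 := f.norm_coe_le_norm s
    rw [Real.norm_eq_abs] at h2 h3
    have := abs_le.1 h2
    have := abs_le.1 h3
    linarith [this.1]
  have hne : {r : ℝ | ∃ a : ℕ →₀ ℝ, (∑ k ∈ a.support, |a k|) = 1 ∧
      r = ‖∑ k ∈ a.support, a k • x.comp ⟨φ^[n k], hφ.iterate (n k)⟩‖}.Nonempty := by
    refine ⟨_, Finsupp.single 0 1, ?_, rfl⟩
    rw [Finsupp.support_single _ one_ne_zero]
    simp
  have := le_csInf hne hlow
  rw [ht] at this
  linarith

lemma aux_weak_limit {H : Type*} [NormedAddCommGroup H] [InnerProductSpace ℝ H] [CompleteSpace H]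
    (u : ℕ → H) (C : ℝ) (hu : ∀ n, ‖u n‖ ≤ C) (U : Ultrafilter ℕ) :
    ∃ y : H, ∀ h : H, Tendsto (fun n => inner ℝ (u n) h) U (𝓝 (inner ℝ y h)) := by
  have hc := WeakDual.isCompact_closedBall (𝕜 := ℝ) (E := H) 0 C
  let v : ℕ → WeakDual ℝ H := fun n => StrongDual.toWeakDual (InnerProductSpace.toDual ℝ H (u n))
  obtain ⟨y, -, hy⟩ := hc.ultrafilter_le_nhds (U.map v) (by
    rw [Filter.le_principal_iff]
    refine Filter.mem_map.2 (Filter.univ_mem' fun n => ?_)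
    simp only [Set.mem_preimage, Metric.mem_closedBall, dist_zero_right]
    exact ((InnerProductSpace.toDual ℝ H).norm_map (u n)).le.trans (hu n))
  refine ⟨(InnerProductSpace.toDual ℝ H).symm (WeakDual.toStrongDual y), fun h => ?_⟩
  have h1 : Tendsto v U (𝓝 y) := hy
  have h2 := ((WeakDual.eval_continuous (𝕜 := ℝ) h).tendsto y).comp h1
  simp only [InnerProductSpace.toDual_symm_apply]
  exact h2

lemma aux_threshold {Ω : Type*} [MeasurableSpace Ω] (m : Measure Ω) [IsFiniteMeasure m]
    (f : ℕ → Ω → ℝ) (hf : ∀ n, Measurable (f n)) (C : ℝ) (hC : ∀ n t, |f n t| ≤ C)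
    (ε : ℝ) (hε : 0 < ε) (hsep : ∀ i j, i < j → ε ≤ ∫ t, |f i t - f j t| ∂m)
    (U : Ultrafilter ℕ) (hU : (U : Filter ℕ) ≤ atTop) :
    ∃ (α β : ℝ) (D : Set Ω), α < β ∧ MeasurableSet D ∧ 0 < m D ∧
      ∀ D' ⊆ D, MeasurableSet D' → 0 < m D' →
        ∀ᶠ n in (U : Filter ℕ), 0 < m (D' ∩ {t | β < f n t}) ∧ 0 < m (D' ∩ {t | f n t < α}) := by
  have hm : ∀ n, MemLp (f n) 2 m := fun n =>
    MemLp.of_bound (hf n).aestronglyMeasurable C (ae_of_all _ (hC n))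
  have hC0 : 0 ≤ C := by
    by_contra hc
    have : IsEmpty Ω := ⟨fun t => hc ((abs_nonneg _).trans (hC 0 t))⟩
    have := hsep 0 1 one_pos
    simp [Measure.eq_zero_of_isEmpty m] at this
    linarith
  have hsqb : ∀ n t, |f n t ^ 2| ≤ C ^ 2 := fun n t => by
    rw [abs_pow]; exact pow_le_pow_left₀ (abs_nonneg _) (hC n t) 2
  have hm2 : ∀ n, MemLp (fun t => f n t ^ 2) 2 m := fun n =>
    MemLp.of_bound ((hf n).pow_const 2).aestronglyMeasurable (C ^ 2) (ae_of_all _ (hsqb n))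
  have hb : ∀ (g : ℕ → Ω → ℝ) (hg : ∀ n, MemLp (g n) 2 m) (B : ℝ), (∀ n t, |g n t| ≤ B) → 0 ≤ B →
      ∃ C', ∀ n, ‖(hg n).toLp‖ ≤ C' := by
    intro g hg B hB hB0
    refine ⟨_, fun n => Lp.norm_le_of_ae_bound (C := B) hB0 ?_⟩
    filter_upwards [(hg n).coeFn_toLp] with t ht
    rw [ht]; exact hB n t
  obtain ⟨C1, hC1⟩ := hb f hm C hC hC0
  obtain ⟨C2, hC2⟩ := hb _ hm2 (C ^ 2) hsqb (sq_nonneg C)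
  obtain ⟨y, hy⟩ := aux_weak_limit (fun n => (hm n).toLp) C1 hC1 U
  obtain ⟨w, hw⟩ := aux_weak_limit (fun n => (hm2 n).toLp) C2 hC2 U
  -- set integrals converge
  have hset : ∀ (g : ℕ → Ω → ℝ) (hg : ∀ n, MemLp (g n) 2 m) (z : Lp ℝ 2 m),
      (∀ h, Tendsto (fun n => inner ℝ ((hg n).toLp) h) U (𝓝 (inner ℝ z h))) →
      ∀ A, MeasurableSet A → Tendsto (fun n => ∫ t in A, g n t ∂m) U (𝓝 (∫ t in A, z t ∂m)) := by
    intro g hg z hz A hA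
    have h1 := hz (indicatorConstLp 2 hA (measure_ne_top m A) (1 : ℝ))
    simp only [real_inner_comm (indicatorConstLp 2 hA (measure_ne_top m A) (1 : ℝ)),
      L2.inner_indicatorConstLp_one] at h1
    refine h1.congr fun n => ?_
    exact setIntegral_congr_ae hA ((hg n).coeFn_toLp.mono fun t ht _ => ht)
  have hy1 := hset f hm y hy
  have hw1 := hset _ hm2 w hw
  have hyi : Integrable y m := (Lp.memLp y).integrable (by norm_num)
  have hwi : Integrable w m := (Lp.memLp w).integrable (by norm_num)
  have hy2i : Integrable (fun t => y t ^ 2) m := (Lp.memLp y).integrable_sq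
  have hyM : Measurable y := (Lp.stronglyMeasurable y).measurable
  have hwM : Measurable w := (Lp.stronglyMeasurable w).measurable
  have hfi : ∀ n, Integrable (f n) m := fun n => (hm n).integrable (by norm_num)
  have hf2i : ∀ n, Integrable (fun t => f n t ^ 2) m := fun n => (hm2 n).integrable (by norm_num)
  -- positivity
  have hpos : m {t | y t ^ 2 < w t} ≠ 0 := by
    intro h0
    have hle : ∀ᵐ t ∂m, w t ≤ y t ^ 2 := by
      have : ∀ᵐ t ∂m, ¬ (y t ^ 2 < w t) := by
        rw [ae_iff]; simpa using h0
      exact this.mono fun t ht => not_lt.1 ht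
    have hint : ∫ t, w t ∂m ≤ ∫ t, y t ^ 2 ∂m := integral_mono_ae hwi hy2i hle
    have hyy : inner ℝ y y = ∫ t, y t ^ 2 ∂m := by
      rw [L2.inner_def]
      refine integral_congr_ae (ae_of_all _ fun t => ?_)
      simp [pow_two]
    have hfy : ∀ n, inner ℝ (hm n).toLp y = ∫ t, f n t * y t ∂m := by
      intro n
      rw [L2.inner_def]
      refine integral_congr_ae ((hm n).coeFn_toLp.mono fun t ht => ?_)
      simp [ht, mul_comm]
    have hfyi : ∀ n, Integrable (fun t => f n t * y t) m := fun n =>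
      (hm n).integrable_mul (Lp.memLp y)
    have hlim : Tendsto (fun n => ∫ t, (f n t - y t) ^ 2 ∂m) U
        (𝓝 (∫ t, w t ∂m - 2 * (∫ t, y t ^ 2 ∂m) + ∫ t, y t ^ 2 ∂m)) := by
      have h1 : Tendsto (fun n => ∫ t, f n t ^ 2 ∂m) U (𝓝 (∫ t, w t ∂m)) := by
        simpa using hw1 Set.univ MeasurableSet.univ
      have h2 : Tendsto (fun n => ∫ t, f n t * y t ∂m) U (𝓝 (∫ t, y t ^ 2 ∂m)) := by
        rw [← hyy]; simp only [← hfy]; exact hy y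
      refine ((h1.sub (h2.const_mul 2)).add_const (∫ t, y t ^ 2 ∂m)).congr fun n => ?_
      have i3 : Integrable (fun t => f n t ^ 2 - 2 * (f n t * y t)) m :=
        (hf2i n).sub ((hfyi n).const_mul 2)
      rw [← integral_const_mul, ← integral_sub (hf2i n) ((hfyi n).const_mul 2),
        ← integral_add i3 hy2i]
      refine integral_congr_ae (ae_of_all _ fun t => ?_)
      simp only; ring
    -- smallness in L¹
    have hL1 : ∀ n, ∀ δ > 0, ∫ t, |f n t - y t| ∂m ≤
        δ * m.real Set.univ + δ⁻¹ * ∫ t, (f n t - y t) ^ 2 ∂m := by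
      intro n δ hδ
      have i2 : Integrable (fun t => (f n t - y t) ^ 2) m := ((hm n).sub (Lp.memLp y)).integrable_sq
      have : ∫ t, |f n t - y t| ∂m ≤ ∫ t, (δ + δ⁻¹ * (f n t - y t) ^ 2) ∂m := by
        refine integral_mono ((hfi n).sub hyi).abs ((integrable_const δ).add (i2.const_mul _)) ?_
        intro t
        simp only
        rcases le_or_gt |f n t - y t| δ with h | h
        · have : 0 ≤ δ⁻¹ * (f n t - y t) ^ 2 := by positivity
          linarith
        · have h3 : |f n t - y t| ≤ δ⁻¹ * (f n t - y t) ^ 2 := by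
            rw [← sq_abs, inv_mul_eq_div, le_div_iff₀ hδ]
            nlinarith
          linarith
      refine this.trans (le_of_eq ?_)
      rw [integral_add (integrable_const δ) (i2.const_mul _), integral_const_mul]
      simp [mul_comm]
    set T := m.real Set.univ with hT
    have hT0 : 0 ≤ T := measureReal_nonneg
    set δ := ε / (8 * (T + 1)) with hδ
    have hδ0 : 0 < δ := by positivity
    have hev : ∀ᶠ n in (U : Filter ℕ), ∫ t, (f n t - y t) ^ 2 ∂m < δ * (ε / 8) := by
      refine hlim.eventually_lt_const ?_
      have : 0 < δ * (ε / 8) := by positivity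
      linarith
    have hsm : ∀ᶠ n in (U : Filter ℕ), ∫ t, |f n t - y t| ∂m < ε / 2 := by
      filter_upwards [hev] with n hn
      refine (hL1 n δ hδ0).trans_lt ?_
      have e1 : δ * T ≤ ε / 8 := by
        rw [hδ, div_mul_eq_mul_div, div_le_div_iff₀ (by positivity) (by positivity)]
        nlinarith
      have e2 : δ⁻¹ * ∫ t, (f n t - y t) ^ 2 ∂m < δ⁻¹ * (δ * (ε / 8)) := by gcongr
      rw [inv_mul_cancel_left₀ hδ0.ne'] at e2
      linarith
    obtain ⟨i, hi⟩ := hsm.exists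
    obtain ⟨j, hj, hij⟩ := (hsm.and (hU (eventually_gt_atTop i))).exists
    have h5 := hsep i j hij
    have h6 : ∫ t, |f i t - f j t| ∂m ≤ ∫ t, (|f i t - y t| + |f j t - y t|) ∂m := by
      refine integral_mono ((hfi i).sub (hfi j)).abs
        (((hfi i).sub hyi).abs.add ((hfi j).sub hyi).abs) fun t => ?_
      simp only
      have := abs_sub_le (f i t) (y t) (f j t)
      rwa [abs_sub_comm (y t)] at this
    have i4 : ∀ n, Integrable (fun t => |f n t - y t|) m := fun n => ((hfi n).sub hyi).abs
    rw [integral_add (i4 i) (i4 j)] at h6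
    linarith
  -- choose κ and R
  obtain ⟨k, hk⟩ : ∃ k : ℕ, m {t | y t ^ 2 + 1 / ((k : ℝ) + 1) ≤ w t ∧ |y t| ≤ k} ≠ 0 := by
    by_contra hcon
    push Not at hcon
    apply hpos
    refine measure_mono_null ?_ (measure_iUnion_null hcon)
    intro t ht
    have ht' : 0 < w t - y t ^ 2 := sub_pos.2 ht
    obtain ⟨k1, hk1⟩ := exists_nat_one_div_lt ht'
    obtain ⟨k2, hk2⟩ := exists_nat_ge |y t|
    refine Set.mem_iUnion.2 ⟨max k1 k2, ?_, ?_⟩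
    · have : (1 : ℝ) / (((max k1 k2 : ℕ) : ℝ) + 1) ≤ 1 / ((k1 : ℝ) + 1) := by
        apply one_div_le_one_div_of_le (by positivity)
        have : (k1 : ℝ) ≤ ((max k1 k2 : ℕ) : ℝ) := by exact_mod_cast le_max_left _ _
        linarith
      linarith
    · refine hk2.trans ?_
      exact_mod_cast le_max_right _ _
  set κ : ℝ := 1 / ((k : ℝ) + 1) with hκ
  have hκ0 : 0 < κ := by positivity
  set B : ℝ := C + k + 1 with hB
  have hB0 : 0 < B := by positivity
  set η : ℝ := min (κ / (4 * B)) (1 / 2) with hη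
  have hη0 : 0 < η := by positivity
  have hηB : B * (3 * η) < κ := by
    have h1 : η ≤ κ / (4 * B) := min_le_left _ _
    have : B * (3 * η) ≤ B * (3 * (κ / (4 * B))) := by gcongr
    have h2 : B * (3 * (κ / (4 * B))) = 3 / 4 * κ := by field_simp
    linarith
  -- choose γ
  obtain ⟨z, hz⟩ : ∃ z : ℤ, m {t | (y t ^ 2 + κ ≤ w t ∧ |y t| ≤ k) ∧ |y t - z * η| ≤ η} ≠ 0 := by
    by_contra hcon
    push Not at hcon
    apply hk
    refine measure_mono_null ?_ (measure_iUnion_null hcon)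
    intro t ht
    refine Set.mem_iUnion.2 ⟨⌊y t / η⌋, ht, ?_⟩
    have h1 := Int.floor_le (y t / η)
    have h2 := Int.lt_floor_add_one (y t / η)
    rw [le_div_iff₀ hη0] at h1
    rw [div_lt_iff₀ hη0] at h2
    rw [abs_le]; constructor <;> linarith
  set γ : ℝ := z * η with hγ
  set D : Set Ω := {t | (y t ^ 2 + κ ≤ w t ∧ |y t| ≤ k) ∧ |y t - γ| ≤ η} with hD
  have hDm : MeasurableSet D := by
    refine MeasurableSet.inter (MeasurableSet.inter ?_ ?_) ?_
    · exact measurableSet_le ((hyM.pow_const 2).add_const κ) hwM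
    · exact measurableSet_le hyM.abs measurable_const
    · exact measurableSet_le (hyM.sub_const γ).abs measurable_const
  have hDne : D.Nonempty := by
    by_contra h
    rw [Set.not_nonempty_iff_eq_empty] at h
    rw [h] at hz; simp at hz
  have hγB : |γ| ≤ k + 1 := by
    obtain ⟨t, ⟨-, h1⟩, h2⟩ := hDne
    have h3 : η ≤ 1 / 2 := min_le_right _ _
    have := abs_le.1 h1
    have := abs_le.1 h2
    rw [abs_le]; constructor <;> linarith
  have hfB : ∀ n t, |f n t - γ| ≤ B := fun n t => by
    have := abs_sub (f n t) γ
    linarith [hC n t]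
  refine ⟨γ - η, γ + η, D, by linarith, hDm, pos_iff_ne_zero.2 hz, ?_⟩
  intro D' hD' hD'm hD'0
  have hr0 : 0 < m.real D' := by
    rw [measureReal_def]; exact ENNReal.toReal_pos hD'0.ne' (measure_ne_top _ _)
  -- limits
  have L1 : Tendsto (fun n => ∫ t in D', (f n t - γ) ∂m) U (𝓝 (∫ t in D', (y t - γ) ∂m)) := by
    have h : ∀ g : Ω → ℝ, Integrable g m →
        ∫ t in D', (g t - γ) ∂m = ∫ t in D', g t ∂m - ∫ t in D', γ ∂m := fun g hg =>
      integral_sub hg.integrableOn (integrable_const γ)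
    rw [h _ hyi]
    simp only [h _ (hfi _)]
    exact (hy1 D' hD'm).sub_const _
  have L2 : Tendsto (fun n => ∫ t in D', (f n t - γ) ^ 2 ∂m) U
      (𝓝 (∫ t in D', (w t - 2 * γ * y t + γ ^ 2) ∂m)) := by
    have h : ∀ g g2 : Ω → ℝ, Integrable g m → Integrable g2 m →
        ∫ t in D', (g2 t - 2 * γ * g t + γ ^ 2) ∂m =
          ∫ t in D', g2 t ∂m - 2 * γ * ∫ t in D', g t ∂m + ∫ t in D', γ ^ 2 ∂m := by
      intro g g2 hg hg2
      have i5 : Integrable (fun t => 2 * γ * g t) (m.restrict D') :=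
        (hg.const_mul (2 * γ)).integrableOn
      have i6 : Integrable (fun t => g2 t - 2 * γ * g t) (m.restrict D') :=
        (hg2.sub (hg.const_mul (2 * γ))).integrableOn
      rw [integral_add i6 (integrable_const _),
        integral_sub hg2.integrableOn i5, integral_const_mul]
    rw [h y w hyi hwi]
    refine (((hw1 D' hD'm).sub ((hy1 D' hD'm).const_mul (2 * γ))).add_const
      (∫ t in D', γ ^ 2 ∂m)).congr fun n => ?_
    rw [← h (f n) _ (hfi n) (hf2i n)]
    refine integral_congr_ae (ae_of_all _ fun t => ?_)
    simp only; ring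
  have b1 : |∫ t in D', (y t - γ) ∂m| ≤ η * m.real D' := by
    have := norm_setIntegral_le_of_norm_le_const (μ := m) (s := D') (f := fun t => y t - γ) (C := η)
      (measure_lt_top m D') (fun t ht => (hD' ht).2)
    simpa using this
  have b2 : κ * m.real D' ≤ ∫ t in D', (w t - 2 * γ * y t + γ ^ 2) ∂m := by
    have : ∫ t in D', κ ∂m ≤ ∫ t in D', (w t - 2 * γ * y t + γ ^ 2) ∂m := by
      refine setIntegral_mono_on (integrable_const _)
        ((hwi.sub (hyi.const_mul _)).add (integrable_const _)).integrableOn hD'm ?_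
      intro t ht
      have := (hD' ht).1.1
      nlinarith [sq_nonneg (y t - γ)]
    simpa [mul_comm] using this
  -- main contradiction for a sign s
  have key : ∀ s : ℝ, (s = 1 ∨ s = -1) →
      ∀ᶠ n in (U : Filter ℕ), 0 < m (D' ∩ {t | η < s * (f n t - γ)}) := by
    intro s hs
    by_contra hcon
    have hcon' : ∀ᶠ n in (U : Filter ℕ), ¬ 0 < m (D' ∩ {t | η < s * (f n t - γ)}) :=
      Ultrafilter.eventually_not.2 hcon
    have hs2 : s ^ 2 = 1 := by rcases hs with rfl | rfl <;> norm_num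
    have hsa : |s| = 1 := by rcases hs with rfl | rfl <;> norm_num
    have hbd : ∀ᶠ n in (U : Filter ℕ), ∫ t in D', (f n t - γ) ^ 2 ∂m ≤
        B * (2 * η * m.real D' - s * ∫ t in D', (f n t - γ) ∂m) := by
      filter_upwards [hcon'] with n hn
      have hn0 : m (D' ∩ {t | η < s * (f n t - γ)}) = 0 := by simpa using hn
      have i7 : Integrable (fun t => f n t - γ) (m.restrict D') :=
        ((hfi n).sub (integrable_const γ)).integrableOn
      have i8 : Integrable (fun t => (f n t - γ) ^ 2) (m.restrict D') :=
        (((hm n).sub (memLp_const γ)).integrable_sq).integrableOn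
      have hle : ∫ t in D', (f n t - γ) ^ 2 ∂m ≤ ∫ t in D', B * (2 * η - s * (f n t - γ)) ∂m := by
        refine setIntegral_mono_ae_restrict i8
          (((integrable_const _).sub (i7.const_mul s)).const_mul B) ?_
        rw [EventuallyLE, ae_restrict_iff' hD'm]
        have : ∀ᵐ t ∂m, t ∉ D' ∩ {t | η < s * (f n t - γ)} := measure_eq_zero_iff_ae_notMem.1 hn0
        filter_upwards [this] with t ht htD
        have hu : s * (f n t - γ) ≤ η := not_lt.1 fun h => ht ⟨htD, h⟩
        have hu2 : (f n t - γ) ^ 2 = (s * (f n t - γ)) ^ 2 := by rw [mul_pow, hs2, one_mul]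
        have hu3 : |s * (f n t - γ)| ≤ B := by rw [abs_mul, hsa, one_mul]; exact hfB n t
        rw [hu2]
        generalize s * (f n t - γ) = u at hu hu3
        have := abs_le.1 hu3
        rcases le_or_gt 0 u with h0 | h0
        · nlinarith
        · nlinarith
      refine hle.trans (le_of_eq ?_)
      rw [integral_const_mul, integral_sub (integrable_const _) (i7.const_mul s),
        integral_const_mul s (fun t => f n t - γ)]
      have i9 : ∫ t in D', (2 * η) ∂m = 2 * η * m.real D' := by
        rw [setIntegral_const, smul_eq_mul, mul_comm]
      rw [i9]
    have hfin := le_of_tendsto_of_tendsto L2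
      (((L1.const_mul s).const_sub (2 * η * m.real D')).const_mul B) hbd
    have hb1 : -(η * m.real D') ≤ s * ∫ t in D', (y t - γ) ∂m := by
      have h1 : |s * ∫ t in D', (y t - γ) ∂m| ≤ η * m.real D' := by
        rw [abs_mul, hsa, one_mul]; exact b1
      exact (abs_le.1 h1).1
    have h8 : B * (2 * η * m.real D' - s * ∫ t in D', (y t - γ) ∂m) ≤
        B * (3 * η) * m.real D' := by
      have : 2 * η * m.real D' - s * ∫ t in D', (y t - γ) ∂m ≤ 3 * η * m.real D' := by linarith
      calc _ ≤ B * (3 * η * m.real D') := by gcongr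
        _ = _ := by ring
    have h9 : B * (3 * η) * m.real D' < κ * m.real D' := by gcongr
    linarith
  have k1 := key 1 (Or.inl rfl)
  have k2 := key (-1) (Or.inr rfl)
  filter_upwards [k1, k2] with n h1 h2
  constructor
  · convert h1 using 3
    ext t; simp only [Set.mem_ofPred_eq]; constructor <;> intro h <;> linarith
  · convert h2 using 3
    ext t; simp only [Set.mem_ofPred_eq]; constructor <;> intro h <;> linarith

lemma aux_norm_toLp {Ω : Type*} [TopologicalSpace Ω] [CompactSpace Ω] [MeasurableSpace Ω]
    [BorelSpace Ω] (m : Measure Ω) [IsFiniteMeasure m] (f g : C(Ω, ℝ)) :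
    dist (ContinuousMap.toLp (E := ℝ) 1 m ℝ f) (ContinuousMap.toLp (E := ℝ) 1 m ℝ g) =
      ∫ t, |f t - g t| ∂m := by
  rw [dist_eq_norm, ← map_sub, L1.norm_eq_integral_norm]
  refine integral_congr_ae ?_
  filter_upwards [ContinuousMap.coeFn_toLp (p := 1) (𝕜 := ℝ) m (f - g)] with t ht
  rw [ht]; simp

lemma aux_tb {Ω : Type*} [TopologicalSpace Ω] [CompactSpace Ω] [MeasurableSpace Ω]
    [BorelSpace Ω] (φ : Ω → Ω) (hφ : Continuous φ) (htame : Tame φ hφ) (x : C(Ω, ℝ))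
    (m : Measure Ω) [IsFiniteMeasure m] :
    TotallyBounded (Set.range fun n => ContinuousMap.toLp (E := ℝ) 1 m ℝ (xit φ hφ x n)) := by
  set X : ℕ → Lp ℝ 1 m := fun n => ContinuousMap.toLp (E := ℝ) 1 m ℝ (xit φ hφ x n) with hX
  by_contra hnot
  rw [Metric.totallyBounded_iff] at hnot
  push Not at hnot
  obtain ⟨ε, hε, hnot⟩ := hnot
  have hex : ∀ N : ℕ, ∃ n, ∀ j < N, ε ≤ dist (X n) (X j) := by
    intro N
    have h1 := hnot (X '' Set.Iio N) ((Set.finite_Iio N).image X)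
    obtain ⟨_, ⟨n, rfl⟩, hn⟩ := Set.not_subset.1 h1
    refine ⟨n, fun j hj => ?_⟩
    by_contra hlt
    exact hn (Set.mem_biUnion (Set.mem_image_of_mem X hj) (not_le.1 hlt))
  choose g hg using hex
  have hgN : ∀ N, N ≤ g N := by
    intro N
    by_contra h
    have := hg N (g N) (not_le.1 h)
    rw [dist_self] at this
    linarith
  let n : ℕ → ℕ := fun k => Nat.rec 0 (fun _ p => g (p + 1)) k
  have hns : ∀ k, n (k + 1) = g (n k + 1) := fun k => rfl
  have hn : StrictMono n := strictMono_nat_of_lt_succ fun k => by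
    rw [hns]; exact hgN _
  have hsep : ∀ i j, i < j → ε ≤ ∫ t, |xit φ hφ x (n i) t - xit φ hφ x (n j) t| ∂m := by
    intro i j hij
    obtain ⟨l, rfl⟩ : ∃ l, j = l + 1 := ⟨j - 1, by omega⟩
    have h1 : n i < n l + 1 := Nat.lt_succ_of_le (hn.monotone (by omega))
    have h2 := hg _ _ h1
    rw [← hns, dist_comm, hX, aux_norm_toLp] at h2
    exact h2
  obtain ⟨α, β, D, hαβ, hDm, hD0, hD⟩ := aux_threshold m (fun k => xit φ hφ x (n k))
    (fun k => (xit φ hφ x (n k)).continuous.measurable) ‖x‖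
    (fun k t => x.norm_coe_le_norm _) ε hε hsep (hyperfilter ℕ) Nat.hyperfilter_le_atTop
  obtain ⟨k, hk, hW⟩ := aux_tree (fun W => MeasurableSet W ∧ W ⊆ D ∧ 0 < m W)
    (hyperfilter ℕ : Filter ℕ) Nat.hyperfilter_le_atTop
    (fun k => {t | β < xit φ hφ x (n k) t}) (fun k => {t | xit φ hφ x (n k) t < α})
    (by
      rintro W ⟨h1, h2, h3⟩
      filter_upwards [hD W h2 h1 h3] with i hi
      refine ⟨⟨h1.inter ?_, Set.inter_subset_left.trans h2, hi.1⟩,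
        ⟨h1.inter ?_, Set.inter_subset_left.trans h2, hi.2⟩⟩
      · exact measurableSet_lt measurable_const (xit φ hφ x (n i)).continuous.measurable
      · exact measurableSet_lt (xit φ hφ x (n i)).continuous.measurable measurable_const)
    D ⟨hDm, subset_rfl, hD0⟩
  refine aux_no_indep φ hφ htame x (fun i => n (k i)) (hn.comp hk) hαβ fun K σ => ?_
  obtain ⟨W, ⟨-, -, hW0⟩, -, hWk⟩ := hW K σ
  obtain ⟨t, ht⟩ := nonempty_of_measure_ne_zero hW0.ne'
  exact ⟨t, fun i hi => ⟨fun h => (hWk i hi).1 h ht, fun h => (hWk i hi).2 h ht⟩⟩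

lemma aux_limit_measure {Ω : Type*} [MetricSpace Ω] [CompactSpace Ω] [MeasurableSpace Ω]
    [BorelSpace Ω] (ι : ℕ → Type) [∀ K, Fintype (ι K)] [∀ K, Nonempty (ι K)]
    (t : ∀ K, ι K → Ω) :
    ∃ (m : Measure Ω) (U : Ultrafilter ℕ), IsProbabilityMeasure m ∧ (U : Filter ℕ) ≤ atTop ∧
      ∀ f : C(Ω, ℝ), Tendsto (fun K => (Fintype.card (ι K) : ℝ)⁻¹ * ∑ i, f (t K i)) U
        (𝓝 (∫ s, f s ∂m)) := by
  letI : ∀ K, MeasurableSpace (ι K) := fun K => ⊤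
  have hex : ∀ K, ∃ p : ProbabilityMeasure Ω, ∀ f : C(Ω, ℝ),
      ∫ s, f s ∂(p : Measure Ω) = (Fintype.card (ι K) : ℝ)⁻¹ * ∑ i, f (t K i) := by
    intro K
    have htm : Measurable (t K) := fun s _ => trivial
    let q : Measure (ι K) := (PMF.uniformOfFintype (ι K)).toMeasure
    have : IsProbabilityMeasure (q.map (t K)) := Measure.isProbabilityMeasure_map htm.aemeasurable
    refine ⟨⟨q.map (t K), this⟩, fun f => ?_⟩
    change ∫ s, f s ∂(q.map (t K)) = _
    rw [integral_map htm.aemeasurable f.continuous.aestronglyMeasurable]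
    have : MeasurableSingletonClass (ι K) := ⟨fun _ => trivial⟩
    rw [PMF.integral_eq_sum, Finset.mul_sum]
    simp
  choose p hp using hex
  obtain ⟨m, -, hm⟩ := (isCompact_univ (X := ProbabilityMeasure Ω)).ultrafilter_le_nhds
    ((hyperfilter ℕ).map p) (by simp)
  refine ⟨m, hyperfilter ℕ, inferInstance, Nat.hyperfilter_le_atTop, fun f => ?_⟩
  have h1 : Tendsto p (hyperfilter ℕ : Filter ℕ) (𝓝 m) := hm
  have h2 := (ProbabilityMeasure.tendsto_iff_forall_integral_tendsto.1 h1)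
    (BoundedContinuousFunction.mkOfCompact f)
  simpa [hp] using h2

/-- Cesàro averages. -/
noncomputable def av {Ω : Type*} (φ : Ω → Ω) (x : Ω → ℝ) (N : ℕ) (t : Ω) : ℝ :=
  (N : ℝ)⁻¹ * ∑ j ∈ Finset.range N, x (φ^[j] t)

lemma av_continuous {Ω : Type*} [TopologicalSpace Ω] {φ : Ω → Ω} (hφ : Continuous φ) {x : Ω → ℝ}
    (hx : Continuous x) (N : ℕ) : Continuous (av φ x N) := by
  unfold av
  exact continuous_const.mul (continuous_finsetSum _ fun j _ => hx.comp (hφ.iterate j))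

lemma aux_LB {Ω : Type*} [MetricSpace Ω] [CompactSpace Ω] [MeasurableSpace Ω]
    [BorelSpace Ω] (φ : Ω → Ω) (hφ : Continuous φ) (htame : Tame φ hφ) (x : C(Ω, ℝ))
    (N n : ℕ → ℕ) (hN : ∀ k, 0 < N k) (D : Set Ω) (hD : D.Nonempty) {α β : ℝ} (hαβ : α < β)
    (h : ∀ O, IsOpen O → (O ∩ D).Nonempty → ∀ᶠ k in atTop,
      (∃ t ∈ O ∩ D, β < av φ x (N k) (φ^[n k] t)) ∧
      (∃ t ∈ O ∩ D, av φ x (N k) (φ^[n k] t) < α)) : False := by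
  let y : ℕ → C(Ω, ℝ) := fun k =>
    ⟨fun t => av φ x (N k) (φ^[n k] t), (av_continuous hφ x.continuous _).comp (hφ.iterate _)⟩
  have hyeq : ∀ k, y k = ∑ j ∈ Finset.range (N k), (N k : ℝ)⁻¹ • xit φ hφ x (n k + j) := by
    intro k; ext t
    simp only [y, ContinuousMap.coe_mk, av, xit, ContinuousMap.sum_apply, ContinuousMap.smul_apply,
      ContinuousMap.comp_apply, smul_eq_mul, Finset.mul_sum]
    refine Finset.sum_congr rfl fun j _ => ?_
    rw [← Function.iterate_add_apply, add_comm]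
  obtain ⟨k, hk, hW⟩ := aux_tree (fun W => (∃ O, IsOpen O ∧ W = O ∩ D) ∧ W.Nonempty) atTop le_rfl
    (fun k => {t | β < y k t}) (fun k => {t | y k t < α})
    (by
      rintro W ⟨⟨O, hO, rfl⟩, hne⟩
      filter_upwards [h O hO hne] with i hi
      refine ⟨⟨⟨O ∩ {t | β < y i t}, hO.inter ?_, ?_⟩, ?_⟩, ⟨⟨O ∩ {t | y i t < α}, hO.inter ?_, ?_⟩, ?_⟩⟩
      · exact isOpen_lt continuous_const (y i).continuous
      · rw [Set.inter_right_comm]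
      · obtain ⟨t, ht, h1⟩ := hi.1; exact ⟨t, ht, h1⟩
      · exact isOpen_lt (y i).continuous continuous_const
      · rw [Set.inter_right_comm]
      · obtain ⟨t, ht, h1⟩ := hi.2; exact ⟨t, ht, h1⟩)
    D ⟨⟨Set.univ, isOpen_univ, by simp⟩, hD⟩
  have hpt : ∀ (K : ℕ) (σ : Fin K → Bool), ∃ t, ∀ i : Fin K, (σ i = true → β < y (k i) t) ∧
      (σ i = false → y (k i) t < α) := by
    intro K σ
    obtain ⟨W, ⟨-, hne⟩, -, hWk⟩ := hW K (fun i => if hi : i < K then σ ⟨i, hi⟩ else true)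
    obtain ⟨t, ht⟩ := hne
    refine ⟨t, fun i => ?_⟩
    have := hWk i i.2
    simp only [i.2, dif_pos] at this
    exact ⟨fun h => this.1 h ht, fun h => this.2 h ht⟩
  choose t ht using hpt
  obtain ⟨m, U, hm, hU, hlim⟩ := aux_limit_measure (fun K => Fin K → Bool) t
  have hsep : ∀ i j, i ≠ j → (β - α) / 2 ≤ dist (ContinuousMap.toLp (E := ℝ) 1 m ℝ (y (k i)))
      (ContinuousMap.toLp (E := ℝ) 1 m ℝ (y (k j))) := by
    intro i j hij
    rw [aux_norm_toLp]
    have h1 := hlim ⟨fun s => |y (k i) s - y (k j) s|,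
      ((y (k i)).continuous.sub (y (k j)).continuous).abs⟩
    refine ge_of_tendsto h1 ?_
    filter_upwards [hU (eventually_gt_atTop (max i j))] with K hK
    have hi : i < K := (le_max_left _ _).trans_lt hK
    have hj : j < K := (le_max_right _ _).trans_lt hK
    simp only [ContinuousMap.coe_mk]
    let fl : (Fin K → Bool) ≃ (Fin K → Bool) :=
      Function.Involutive.toPerm (fun σ => Function.update σ ⟨i, hi⟩ (!σ ⟨i, hi⟩)) (by
        intro σ; simp)
    set H : (Fin K → Bool) → ℝ := fun σ => |y (k i) (t K σ) - y (k j) (t K σ)| with hH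
    have hsum : ∑ σ, H (fl σ) = ∑ σ, H σ := Equiv.sum_comp fl H
    have hne : ∀ σ : Fin K → Bool, σ ⟨i, hi⟩ ≠ σ ⟨j, hj⟩ → β - α ≤ H σ := by
      intro σ hσ
      have a1 := ht K σ ⟨i, hi⟩
      have a2 := ht K σ ⟨j, hj⟩
      simp only [hH]
      cases b1 : σ ⟨i, hi⟩ <;> cases b2 : σ ⟨j, hj⟩
      · simp [b1, b2] at hσ
      · have := a1.2 b1; have := a2.1 b2
        refine le_trans ?_ (neg_le_abs _); simp only at *; linarith
      · have := a1.1 b1; have := a2.2 b2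
        refine le_trans ?_ (le_abs_self _); simp only at *; linarith
      · simp [b1, b2] at hσ
    have hpair : ∀ σ, β - α ≤ H σ + H (fl σ) := by
      intro σ
      have p1 : 0 ≤ H σ := abs_nonneg _
      have p2 : 0 ≤ H (fl σ) := abs_nonneg _
      by_cases hσ : σ ⟨i, hi⟩ = σ ⟨j, hj⟩
      · have : β - α ≤ H (fl σ) := by
          apply hne
          have e1 : fl σ ⟨i, hi⟩ = !σ ⟨i, hi⟩ := by
            simp only [fl, Function.Involutive.coe_toPerm]
            exact Function.update_self _ _ _
          have e2 : fl σ ⟨j, hj⟩ = σ ⟨j, hj⟩ := by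
            simp only [fl, Function.Involutive.coe_toPerm]
            exact Function.update_of_ne (fun h => hij (Fin.mk.inj_iff.1 h).symm) _ _
          rw [e1, e2, hσ]; simp
        linarith
      · linarith [hne σ hσ]
    have htot : (Fintype.card (Fin K → Bool) : ℝ) * (β - α) ≤ 2 * ∑ σ, H σ := by
      calc _ = ∑ _σ : Fin K → Bool, (β - α) := by
            rw [Finset.sum_const, Finset.card_univ, nsmul_eq_mul]
        _ ≤ ∑ σ, (H σ + H (fl σ)) := Finset.sum_le_sum fun σ _ => hpair σ
        _ = _ := by rw [Finset.sum_add_distrib, hsum]; ring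
    have hc : (0 : ℝ) < Fintype.card (Fin K → Bool) := by
      exact_mod_cast Fintype.card_pos
    rw [inv_mul_eq_div, div_le_div_iff₀ two_pos hc]
    linarith
  have htb := (aux_tb φ hφ htame x m).convexHull
  rw [Metric.totallyBounded_iff] at htb
  obtain ⟨F, hF, hcov⟩ := htb ((β - α) / 4) (by linarith)
  have hmem : ∀ i, ∃ z : F, dist (ContinuousMap.toLp (E := ℝ) 1 m ℝ (y (k i))) z < (β - α) / 4 := by
    intro i
    have h1 : ContinuousMap.toLp (E := ℝ) 1 m ℝ (y (k i)) ∈ convexHull ℝ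
        (Set.range fun n => ContinuousMap.toLp (E := ℝ) 1 m ℝ (xit φ hφ x n)) := by
      rw [hyeq, map_sum]
      simp only [map_smul]
      refine (convex_convexHull ℝ _).sum_mem (fun _ _ => by positivity) ?_ ?_
      · have : (N (k i) : ℝ) ≠ 0 := by exact_mod_cast (hN (k i)).ne'
        simp [this]
      · intro j _
        exact subset_convexHull ℝ _ ⟨_, rfl⟩
    have h2 := hcov h1
    simp only [Set.mem_iUnion, Metric.mem_ball] at h2
    obtain ⟨z, hz, h3⟩ := h2
    exact ⟨⟨z, hz⟩, h3⟩
  choose z hz using hmem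
  haveI : Finite F := hF
  obtain ⟨i, j, hij, hzz⟩ := Finite.exists_ne_map_eq_of_infinite z
  have h1 := hsep i j hij
  have h2 := dist_triangle_right (ContinuousMap.toLp (E := ℝ) 1 m ℝ (y (k i)))
    (ContinuousMap.toLp (E := ℝ) 1 m ℝ (y (k j))) (z i)
  have h3 := hz j
  rw [← hzz] at h3
  linarith [hz i]

lemma av_abs_le {Ω : Type*} [TopologicalSpace Ω] [CompactSpace Ω] (φ : Ω → Ω) (x : C(Ω, ℝ))
    (N : ℕ) (t : Ω) : |av φ x N t| ≤ ‖x‖ := by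
  unfold av
  rcases Nat.eq_zero_or_pos N with rfl | hN
  · simp
  have hN' : (0 : ℝ) < N := by exact_mod_cast hN
  rw [abs_mul, abs_of_pos (inv_pos.2 hN'), inv_mul_le_iff₀ hN']
  calc |∑ j ∈ Finset.range N, x (φ^[j] t)| ≤ ∑ j ∈ Finset.range N, |x (φ^[j] t)| :=
        Finset.abs_sum_le_sum_abs _ _
    _ ≤ ∑ _j ∈ Finset.range N, ‖x‖ := Finset.sum_le_sum fun j _ => x.norm_coe_le_norm _
    _ = N * ‖x‖ := by simp

lemma av_neg {Ω : Type*} [TopologicalSpace Ω] (φ : Ω → Ω) (x : C(Ω, ℝ))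
    (N : ℕ) (t : Ω) : av φ (-x : C(Ω, ℝ)) N t = - av φ x N t := by
  simp [av]

lemma av_shift {Ω : Type*} [TopologicalSpace Ω] [CompactSpace Ω] (φ : Ω → Ω) (x : C(Ω, ℝ))
    (N : ℕ) (t : Ω) : |av φ (fun s => x (φ s)) N t - av φ x N t| ≤ (N : ℝ)⁻¹ * (2 * ‖x‖) := by
  unfold av
  rw [← mul_sub, ← Finset.sum_sub_distrib, abs_mul, abs_of_nonneg (by positivity)]
  refine mul_le_mul_of_nonneg_left ?_ (by positivity)
  have : ∑ j ∈ Finset.range N, (x (φ (φ^[j] t)) - x (φ^[j] t)) = x (φ^[N] t) - x t := by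
    have h := Finset.sum_range_sub (fun j => x (φ^[j] t)) N
    simp only [Function.iterate_succ_apply', Function.iterate_zero, id_eq] at h
    exact h
  rw [this]
  have h1 := x.norm_coe_le_norm (φ^[N] t)
  have h2 := x.norm_coe_le_norm t
  rw [Real.norm_eq_abs] at h1 h2
  have := abs_sub (x (φ^[N] t)) (x t)
  linarith

lemma aux_intg {Ω : Type*} [MetricSpace Ω] [CompactSpace Ω] [MeasurableSpace Ω]
    [BorelSpace Ω] (μ : Measure Ω) [IsFiniteMeasure μ] {f : Ω → ℝ} (hf : Continuous f) :
    Integrable f μ :=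
  hf.integrable_of_hasCompactSupport (HasCompactSupport.of_compactSpace f)

lemma aux_int_av {Ω : Type*} [MetricSpace Ω] [CompactSpace Ω] [MeasurableSpace Ω]
    [BorelSpace Ω] (φ : Ω → Ω) (hφ : Continuous φ) (x : C(Ω, ℝ)) (μ : Measure Ω)
    [IsProbabilityMeasure μ] (hμ : MeasurePreserving φ μ μ) (N : ℕ) (hN : 0 < N) (n : ℕ) :
    ∫ t, av φ x N (φ^[n] t) ∂μ = ∫ t, x t ∂μ := by
  have hj : ∀ j, ∫ t, x (φ^[j] t) ∂μ = ∫ t, x t ∂μ := by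
    intro j
    have h := integral_map (μ := μ) (φ := φ^[j]) (hφ.iterate j).measurable.aemeasurable
      (f := x) (by exact x.continuous.aestronglyMeasurable)
    rw [(hμ.iterate j).map_eq] at h
    exact h.symm
  unfold av
  rw [integral_const_mul, integral_finset_sum]
  · have : ∀ i ∈ Finset.range N, ∫ t, x (φ^[i] (φ^[n] t)) ∂μ = ∫ t, x t ∂μ := by
      intro i _
      rw [← hj (i + n)]
      simp only [Function.iterate_add_apply]
    rw [Finset.sum_congr rfl this]
    have : (N : ℝ) ≠ 0 := by exact_mod_cast hN.ne'
    simp; field_simp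
  · intro i _
    exact aux_intg μ (x.continuous.comp ((hφ.iterate i).comp (hφ.iterate n)))

lemma aux_M {Ω : Type*} [MetricSpace Ω] [CompactSpace Ω] [MeasurableSpace Ω]
    [BorelSpace Ω] (φ : Ω → Ω) (hφ : Continuous φ) (x : C(Ω, ℝ)) (X : Set Ω)
    (hX : IsClosed X) (hne : X.Nonempty) (hinv : Set.MapsTo φ X X) :
    ∃ (c : ℝ) (μ : Measure Ω), IsProbabilityMeasure μ ∧ MeasurePreserving φ μ μ ∧ μ Xᶜ = 0 ∧
      (∀ ε > 0, ∀ᶠ N in atTop, ∀ b ∈ X, av φ x N b ≤ c + ε) ∧ ∫ t, x t ∂μ = c := by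
  obtain ⟨b0, hb0⟩ := hne
  set S : Set ℝ := {c | ∀ᶠ N in atTop, ∀ b ∈ X, av φ x N b ≤ c} with hS
  have hSne : S.Nonempty := ⟨‖x‖, Eventually.of_forall fun N b _ => (abs_le.1 (av_abs_le φ x N b)).2⟩
  have hSb : BddBelow S := by
    refine ⟨-‖x‖, fun c hc => ?_⟩
    obtain ⟨N, hN⟩ := Eventually.exists (show ∀ᶠ N in atTop, ∀ b ∈ X, av φ x N b ≤ c from hc)
    exact (abs_le.1 (av_abs_le φ x N b0)).1.trans (hN b0 hb0)
  set c := sInf S with hc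
  have hub : ∀ ε > 0, ∀ᶠ N in atTop, ∀ b ∈ X, av φ x N b ≤ c + ε := by
    intro ε hε
    obtain ⟨c', hc', hlt⟩ := exists_lt_of_csInf_lt hSne (show sInf S < c + ε by linarith)
    have hc'' : ∀ᶠ N in atTop, ∀ b ∈ X, av φ x N b ≤ c' := hc'
    filter_upwards [hc''] with N hN b hb
    linarith [hN b hb]
  have hex : ∀ k : ℕ, ∃ (N : ℕ) (b : Ω), k + 1 ≤ N ∧ b ∈ X ∧ c - 1 / ((k : ℝ) + 1) < av φ x N b := by
    intro k
    have hnot : c - 1 / ((k : ℝ) + 1) ∉ S := by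
      intro h
      have := csInf_le hSb h
      have hp : (0 : ℝ) < 1 / ((k : ℝ) + 1) := by positivity
      linarith
    have hfr : ∃ᶠ N in atTop, ¬ ∀ b ∈ X, av φ x N b ≤ c - 1 / ((k : ℝ) + 1) := not_eventually.1 hnot
    obtain ⟨N, h1, h2⟩ := (hfr.and_eventually (eventually_ge_atTop (k + 1))).exists
    push Not at h1
    obtain ⟨b, hb, h1⟩ := h1
    exact ⟨N, b, h2, hb, h1⟩
  choose N b hNk hbX hav using hex
  haveI : ∀ k, Nonempty (Fin (N k)) := fun k => ⟨⟨0, by have := hNk k; omega⟩⟩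
  obtain ⟨m, U, hm, hU, hlim⟩ := aux_limit_measure (fun k => Fin (N k))
    (fun k i => φ^[(i : ℕ)] (b k))
  have hlim' : ∀ f : C(Ω, ℝ), Tendsto (fun k => av φ f (N k) (b k)) U (𝓝 (∫ s, f s ∂m)) := by
    intro f
    refine (hlim f).congr fun k => ?_
    unfold av
    rw [Fintype.card_fin, Fin.sum_univ_eq_sum_range (fun i => f (φ^[i] (b k))) (N k)]
  have hpres : MeasurePreserving φ m m := by
    refine ⟨hφ.measurable, ?_⟩
    haveI : IsProbabilityMeasure (m.map φ) := Measure.isProbabilityMeasure_map hφ.aemeasurable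
    refine ext_of_forall_integral_eq_of_IsFiniteMeasure fun f => ?_
    rw [integral_map hφ.aemeasurable f.continuous.aestronglyMeasurable]
    let g : C(Ω, ℝ) := ⟨f, f.continuous⟩
    have h1 := hlim' g
    have h2 := hlim' (g.comp ⟨φ, hφ⟩)
    have h3 : Tendsto (fun k => av φ (g.comp ⟨φ, hφ⟩) (N k) (b k) - av φ g (N k) (b k)) U (𝓝 0) := by
      have hz : Tendsto (fun k : ℕ => 1 / ((k : ℝ) + 1) * (2 * ‖g‖)) U (𝓝 0) := by
        have := (tendsto_one_div_add_atTop_nhds_zero_nat (𝕜 := ℝ)).mul_const (2 * ‖g‖)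
        rw [zero_mul] at this
        exact this.mono_left hU
      refine squeeze_zero_norm (fun k => ?_) hz
      rw [Real.norm_eq_abs]
      refine (av_shift φ g (N k) (b k)).trans ?_
      refine mul_le_mul_of_nonneg_right ?_ (by positivity)
      rw [one_div]
      refine inv_anti₀ (by positivity) ?_
      exact_mod_cast hNk k
    have h4 := tendsto_nhds_unique h3 (h2.sub h1)
    have h5 : ∫ s, f (φ s) ∂m - ∫ s, f s ∂m = 0 := h4.symm
    linarith
  have hsupp : m Xᶜ = 0 := by
    let g : C(Ω, ℝ) := ⟨fun t => Metric.infDist t X, Metric.continuous_infDist_pt X⟩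
    have hmaps : ∀ j k, φ^[j] (b k) ∈ X := fun j k => hinv.iterate j (hbX k)
    have h1 := hlim' g
    have h2 : (fun k => av φ g (N k) (b k)) = fun _ => 0 := by
      funext k
      unfold av
      rw [Finset.sum_eq_zero, mul_zero]
      intro j _
      exact Metric.infDist_zero_of_mem (hmaps j k)
    rw [h2] at h1
    have h3 : ∫ s, g s ∂m = 0 := (tendsto_nhds_unique tendsto_const_nhds h1).symm
    replace h3 := (integral_eq_zero_iff_of_nonneg (f := g) (fun s => Metric.infDist_nonneg)
      (aux_intg m g.continuous)).1 h3
    have h4 : ∀ᵐ s ∂m, s ∈ X := by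
      filter_upwards [h3] with s hs
      exact (hX.mem_iff_infDist_zero ⟨b0, hb0⟩).2 hs
    exact h4
  refine ⟨c, m, hm, hpres, hsupp, hub, le_antisymm ?_ ?_⟩
  · refine le_of_forall_pos_le_add fun ε hε => ?_
    obtain ⟨K, hK, hK0⟩ := ((hub ε hε).and (eventually_gt_atTop 0)).exists
    rw [← aux_int_av φ hφ x m hpres K hK0 0]
    have : ∫ t, av φ x K (φ^[0] t) ∂m ≤ ∫ _t, (c + ε) ∂m := by
      refine integral_mono_ae (aux_intg m ((av_continuous hφ x.continuous K).comp (hφ.iterate 0)))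
        (integrable_const _) ?_
      have h4 : ∀ᵐ s ∂m, s ∈ X := hsupp
      filter_upwards [h4] with s hs
      exact hK s hs
    simpa using this
  · have hz : Tendsto (fun k : ℕ => c - 1 / ((k : ℝ) + 1)) U (𝓝 (c - 0)) :=
      ((tendsto_one_div_add_atTop_nhds_zero_nat (𝕜 := ℝ)).mono_left hU).const_sub c
    rw [sub_zero] at hz
    exact le_of_tendsto_of_tendsto' hz (hlim' x) fun k => (hav k).le

lemma aux_pt {Ω : Type*} [MetricSpace Ω] [CompactSpace Ω] [MeasurableSpace Ω]
    [BorelSpace Ω] (φ : Ω → Ω) (hφ : Continuous φ) (x : C(Ω, ℝ)) (X : Set Ω)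
    (hinv : Set.MapsTo φ X X) (c : ℝ) (μ : Measure Ω) [IsProbabilityMeasure μ]
    (hμ : MeasurePreserving φ μ μ) (hμX : μ Xᶜ = 0)
    (hub : ∀ ε > 0, ∀ᶠ N in atTop, ∀ b ∈ X, av φ x N b ≤ c + ε) (hc : ∫ t, x t ∂μ = c)
    (O : Set Ω) (hO : IsOpen O) (hO0 : μ O ≠ 0) (D : Set Ω) (hD : μ Dᶜ = 0) {β : ℝ} (hβ : β < c) :
    ∀ᶠ N in atTop, ∀ n, ∃ t ∈ O ∩ D, β < av φ x N (φ^[n] t) := by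
  have hp : 0 < μ.real O := by
    rw [Measure.real]; exact ENNReal.toReal_pos hO0 (measure_ne_top _ _)
  have hq : 0 < (c - β) * μ.real O := mul_pos (by linarith) hp
  filter_upwards [hub ((c - β) * μ.real O / 2) (by linarith), eventually_gt_atTop 0] with N hN hN0 n
  by_contra hcon
  push Not at hcon
  set ε := (c - β) * μ.real O / 2 with hε
  have hcont : Continuous (fun t => av φ x N (φ^[n] t)) :=
    (av_continuous hφ x.continuous N).comp (hφ.iterate n)
  have hi : ∫ t, (c + ε - av φ x N (φ^[n] t)) ∂μ = ε := by
    rw [integral_sub (integrable_const _) (aux_intg μ hcont), aux_int_av φ hφ x μ hμ N hN0 n, hc]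
    simp
  have hle : ∫ t, O.indicator (fun _ => c - β) t ∂μ ≤ ∫ t, (c + ε - av φ x N (φ^[n] t)) ∂μ := by
    refine integral_mono_ae ((integrable_const _).indicator hO.measurableSet)
      (aux_intg μ (continuous_const.sub hcont)) ?_
    have h1 : ∀ᵐ s ∂μ, s ∈ X := hμX
    have h2 : ∀ᵐ s ∂μ, s ∈ D := hD
    filter_upwards [h1, h2] with s hs1 hs2
    by_cases hs : s ∈ O
    · simp only [Set.indicator_of_mem hs]
      have := hcon s ⟨hs, hs2⟩
      linarith
    · simp only [Set.indicator_of_notMem hs]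
      have := hN _ (hinv.iterate n hs1)
      linarith
  rw [hi, integral_indicator_const _ hO.measurableSet, smul_eq_mul] at hle
  linarith [mul_comm (c - β) (μ.real O)]

lemma proximal_iff {Ω : Type*} [PseudoMetricSpace Ω] (φ : Ω → Ω) (a b : Ω) :
    Proximal φ a b ↔ ∀ ε > 0, ∃ n : ℕ, dist (φ^[n] a) (φ^[n] b) < ε := by
  have hb : BddBelow (Set.range fun n : ℕ => dist (φ^[n] a) (φ^[n] b)) :=
    ⟨0, by rintro _ ⟨n, rfl⟩; exact dist_nonneg⟩
  unfold Proximal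
  constructor
  · intro h ε hε
    exact exists_lt_of_ciInf_lt (by rw [h]; exact hε)
  · intro h
    refine le_antisymm ?_ (le_ciInf fun n => dist_nonneg)
    refine le_of_forall_pos_le_add fun ε hε => ?_
    obtain ⟨n, hn⟩ := h ε hε
    have := ciInf_le hb n
    linarith

lemma proximal_symm {Ω : Type*} [PseudoMetricSpace Ω] (φ : Ω → Ω) (a b : Ω)
    (h : Proximal φ a b) : Proximal φ b a := by
  rw [proximal_iff] at *
  intro ε hε
  obtain ⟨n, hn⟩ := h ε hε
  exact ⟨n, by rwa [dist_comm]⟩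

lemma orbitClosure_mapsTo {Ω : Type*} [TopologicalSpace Ω] (φ : Ω → Ω) (hφ : Continuous φ)
    (ω : Ω) : Set.MapsTo φ (orbitClosure φ ω) (orbitClosure φ ω) := by
  refine Set.MapsTo.closure ?_ hφ
  rintro _ ⟨n, rfl⟩
  exact ⟨n + 1, Function.iterate_succ_apply' φ n ω⟩

lemma orbitClosure_subset {Ω : Type*} [TopologicalSpace Ω] (φ : Ω → Ω)
    (ω : Ω) (X : Set Ω) (hX : IsClosed X) (hinv : Set.MapsTo φ X X) (hω : ω ∈ X) :
    orbitClosure φ ω ⊆ X := by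
  refine closure_minimal ?_ hX
  rintro _ ⟨n, rfl⟩
  exact hinv.iterate n hω

lemma mem_orbitClosure {Ω : Type*} [TopologicalSpace Ω] (φ : Ω → Ω) (ω : Ω) :
    ω ∈ orbitClosure φ ω := subset_closure ⟨0, rfl⟩

lemma aux_visit {Ω : Type*} [TopologicalSpace Ω] (φ : Ω → Ω) (ω : Ω) (O : Set Ω) (hO : IsOpen O)
    (h : (O ∩ orbitClosure φ ω).Nonempty) : ∃ j, φ^[j] ω ∈ O := by
  obtain ⟨t, htO, ht⟩ := h
  obtain ⟨_, h1, ⟨j, rfl⟩⟩ := mem_closure_iff.1 ht O hO htO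
  exact ⟨j, h1⟩

lemma aux_exists_minimal {Ω : Type*} [TopologicalSpace Ω] [CompactSpace Ω] (φ : Ω → Ω) (X : Set Ω)
    (hX : IsClosed X) (hne : X.Nonempty) (hinv : Set.MapsTo φ X X) :
    ∃ M, IsMinimalSet φ M ∧ M ⊆ X := by
  obtain ⟨M, hM⟩ := zorn_superset
    {Y : Set Ω | Y.Nonempty ∧ IsClosed Y ∧ Set.MapsTo φ Y Y ∧ Y ⊆ X} (by
    intro C hC hch
    rcases C.eq_empty_or_nonempty with rfl | hCne
    · exact ⟨X, ⟨hne, hX, hinv, subset_rfl⟩, by simp⟩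
    · refine ⟨⋂₀ C, ⟨?_, ?_, ?_, ?_⟩, fun s hs => Set.sInter_subset_of_mem hs⟩
      · haveI := hCne.to_subtype
        refine IsCompact.nonempty_sInter_of_directed_nonempty_isCompact_isClosed
          ?_ (fun s hs => (hC hs).1) (fun s hs => (hC hs).2.1.isCompact) (fun s hs => (hC hs).2.1)
        intro a ha b hb
        rcases hch.total ha hb with hab | hab
        · exact ⟨a, ha, subset_rfl, hab⟩
        · exact ⟨b, hb, hab, subset_rfl⟩
      · exact isClosed_sInter fun s hs => (hC hs).2.1
      · intro t ht s hs
        exact (hC hs).2.2.1 (ht s hs)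
      · obtain ⟨s, hs⟩ := hCne
        exact (Set.sInter_subset_of_mem hs).trans (hC hs).2.2.2)
  refine ⟨M, ⟨hM.prop.1, hM.prop.2.1, hM.prop.2.2.1, ?_⟩, hM.prop.2.2.2⟩
  intro M' hsub h1 h2 h3
  exact hM.eq_of_subset ⟨h1, h2, h3, hsub.trans hM.prop.2.2.2⟩ hsub

lemma aux_min_orbit {Ω : Type*} [TopologicalSpace Ω] (φ : Ω → Ω) (hφ : Continuous φ) (M : Set Ω)
    (hM : IsMinimalSet φ M) (b : Ω) (hb : b ∈ M) : orbitClosure φ b = M :=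
  hM.2.2.2 _ (orbitClosure_subset φ b M hM.2.1 hM.2.2.1 hb) ⟨b, mem_orbitClosure φ b⟩
    isClosed_closure (orbitClosure_mapsTo φ hφ b)

lemma aux_min_pos {Ω : Type*} [MetricSpace Ω] [CompactSpace Ω] [MeasurableSpace Ω]
    [BorelSpace Ω] (φ : Ω → Ω) (hφ : Continuous φ) (M : Set Ω)
    (hM : IsMinimalSet φ M) (μ : Measure Ω) [IsProbabilityMeasure μ]
    (hμ : MeasurePreserving φ μ μ) (hμM : μ Mᶜ = 0) (O : Set Ω) (hO : IsOpen O)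
    (hOM : (O ∩ M).Nonempty) : μ O ≠ 0 := by
  intro h0
  have h1 : ∀ j, μ (φ^[j] ⁻¹' O) = 0 := fun j => by
    rw [(hμ.iterate j).measure_preimage hO.measurableSet.nullMeasurableSet, h0]
  have h2 : μ (⋃ j, φ^[j] ⁻¹' O) = 0 := measure_iUnion_null h1
  have h3 : M ⊆ ⋃ j, φ^[j] ⁻¹' O := by
    intro b hb
    obtain ⟨j, hj⟩ := aux_visit φ b O hO (by rwa [aux_min_orbit φ hφ M hM b hb])
    exact Set.mem_iUnion.2 ⟨j, hj⟩
  have h4 : μ (M ∪ Mᶜ) = 0 := measure_union_null (measure_mono_null h3 h2) hμM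
  rw [Set.union_compl_self, measure_univ] at h4
  exact one_ne_zero h4

lemma aux_min_ue {Ω : Type*} [MetricSpace Ω] [CompactSpace Ω] [MeasurableSpace Ω]
    [BorelSpace Ω] (φ : Ω → Ω) (hφ : Continuous φ) (htame : Tame φ hφ) (x : C(Ω, ℝ)) (M : Set Ω)
    (hM : IsMinimalSet φ M) :
    ∃ γ : ℝ, ∀ ε > 0, ∀ᶠ N in atTop, ∀ b ∈ M, |av φ x N b - γ| ≤ ε := by
  obtain ⟨c, μ, hμp, hμ, hμM, hub, hc⟩ := aux_M φ hφ x M hM.2.1 hM.1 hM.2.2.1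
  obtain ⟨c', μ', hμp', hμ', hμM', hub', hc'⟩ := aux_M φ hφ (-x) M hM.2.1 hM.1 hM.2.2.1
  rcases le_or_gt c (-c') with hle | hlt
  · refine ⟨c, fun ε hε => ?_⟩
    filter_upwards [hub ε hε, hub' ε hε] with N h1 h2 b hb
    have h1 := h1 b hb
    have h2 := h2 b hb
    rw [av_neg] at h2
    rw [abs_le]
    constructor <;> linarith
  · exfalso
    obtain ⟨β, hβ1, hβ2⟩ := exists_between hlt
    obtain ⟨α, hα1, hα2⟩ := exists_between hβ1
    refine aux_LB φ hφ htame x (fun k => k + 1) (fun _ => 0) (fun k => Nat.succ_pos k) M hM.1 hα2 ?_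
    intro O hO hOM
    have h1 := aux_pt φ hφ x M hM.2.2.1 c μ hμ hμM hub hc O hO
      (aux_min_pos φ hφ M hM μ hμ hμM O hO hOM) M hμM hβ2
    have h2 := aux_pt φ hφ (-x) M hM.2.2.1 c' μ' hμ' hμM' hub' hc' O hO
      (aux_min_pos φ hφ M hM μ' hμ' hμM' O hO hOM) M hμM' (show -α < c' by linarith)
    filter_upwards [(tendsto_add_atTop_nat 1).eventually h1,
      (tendsto_add_atTop_nat 1).eventually h2] with k hk1 hk2
    refine ⟨hk1 0, ?_⟩
    obtain ⟨t, ht, h3⟩ := hk2 0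
    rw [av_neg] at h3
    exact ⟨t, ht, by linarith⟩

lemma aux_ellis {Ω : Type*} [MetricSpace Ω] [CompactSpace Ω] (φ : Ω → Ω) (hφ : Continuous φ)
    (ω : Ω) (M : Set Ω) (hM : IsMinimalSet φ M) (hsub : M ⊆ orbitClosure φ ω) :
    ∃ a ∈ M, Proximal φ ω a := by
  have hEc : IsClosed (EllisE φ) := isClosed_closure
  have hcompR : ∀ q : Ω → Ω, Continuous (fun p : Ω → Ω => p ∘ q) := fun q =>
    continuous_pi fun t => continuous_apply (q t)
  have hEcomp : ∀ p ∈ EllisE φ, ∀ q ∈ EllisE φ, p ∘ q ∈ EllisE φ := by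
    intro p hp q hq
    have h1 : ∀ n : ℕ, φ^[n] ∘ q ∈ EllisE φ := by
      intro n
      have hc : Continuous (fun f : Ω → Ω => φ^[n] ∘ f) :=
        continuous_pi fun t => (hφ.iterate n).comp (continuous_apply t)
      refine (Set.MapsTo.closure ?_ hc) hq
      rintro _ ⟨m, rfl⟩
      exact ⟨n + m, Function.iterate_add φ n m⟩
    have h2 : EllisE φ ⊆ (fun p : Ω → Ω => p ∘ q) ⁻¹' EllisE φ := by
      refine closure_minimal ?_ (hEc.preimage (hcompR q))
      rintro _ ⟨n, rfl⟩
      exact h1 n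
    exact h2 hp
  have hEM : ∀ p ∈ EllisE φ, ∀ t ∈ M, p t ∈ M := by
    intro p hp t ht
    have h2 : EllisE φ ⊆ (fun p : Ω → Ω => p t) ⁻¹' M := by
      refine closure_minimal ?_ (hM.2.1.preimage (continuous_apply t))
      rintro _ ⟨n, rfl⟩
      exact hM.2.2.1.iterate n ht
    exact h2 hp
  let sg : Semigroup (Ω → Ω) :=
    { mul := fun p q => p ∘ q, mul_assoc := fun _ _ _ => rfl }
  obtain ⟨u, hu, huu⟩ := @exists_idempotent_in_compact_subsemigroup (Ω → Ω) sg _ _ hcompR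
    {s | s ∈ EllisE φ ∧ s ω ∈ M} (by
      obtain ⟨b, hb⟩ := hM.1
      have h1 : orbitClosure φ ω ⊆ (fun p : Ω → Ω => p ω) '' EllisE φ := by
        refine closure_minimal ?_ (hEc.isCompact.image (continuous_apply ω)).isClosed
        rintro _ ⟨n, rfl⟩
        exact ⟨φ^[n], subset_closure ⟨n, rfl⟩, rfl⟩
      obtain ⟨p, hp, hpb⟩ := h1 (hsub hb)
      refine ⟨p, hp, ?_⟩
      simp only at hpb
      rw [hpb]; exact hb)
    (hEc.inter (hM.2.1.preimage (continuous_apply ω))).isCompact (by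
      intro p hp q hq
      exact ⟨hEcomp p hp.1 q hq.1, hEM p hp.1 _ hq.2⟩)
  refine ⟨u ω, hu.2, ?_⟩
  rw [proximal_iff]
  intro ε hε
  have huu' : u (u ω) = u ω := congrFun huu ω
  have hopen : IsOpen {s : Ω → Ω | dist (s ω) (s (u ω)) < ε} :=
    isOpen_lt ((continuous_apply ω).dist (continuous_apply (u ω))) continuous_const
  obtain ⟨_, h1, ⟨n, rfl⟩⟩ := mem_closure_iff.1 hu.1 _ hopen
    (show dist (u ω) (u (u ω)) < ε by rw [huu', dist_self]; exact hε)
  exact ⟨n, h1⟩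

lemma aux_min_eq {Ω : Type*} [MetricSpace Ω] [CompactSpace Ω] (φ : Ω → Ω)
    (M₁ M₂ : Set Ω) (h₁ : IsMinimalSet φ M₁) (h₂ : IsMinimalSet φ M₂) (a b : Ω) (ha : a ∈ M₁)
    (hb : b ∈ M₂) (hab : Proximal φ a b) : M₁ = M₂ := by
  have hne : (M₁ ∩ M₂).Nonempty := by
    obtain ⟨⟨s, t⟩, hst, hmin⟩ := (h₁.2.1.isCompact.prod h₂.2.1.isCompact).exists_isMinOn
      ⟨(a, b), ha, hb⟩ (continuous_dist.continuousOn)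
    by_contra hemp
    have hpos : 0 < dist s t := by
      rw [dist_pos]
      rintro rfl
      exact hemp ⟨s, hst⟩
    obtain ⟨n, hn⟩ := (proximal_iff φ a b).1 hab _ hpos
    have : dist s t ≤ dist (φ^[n] a) (φ^[n] b) :=
      hmin (show (φ^[n] a, φ^[n] b) ∈ M₁ ×ˢ M₂ from
        ⟨h₁.2.2.1.iterate n ha, h₂.2.2.1.iterate n hb⟩)
    linarith
  have hcl := h₁.2.1.inter h₂.2.1
  have hmaps : Set.MapsTo φ (M₁ ∩ M₂) (M₁ ∩ M₂) := h₁.2.2.1.inter_inter h₂.2.2.1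
  rw [← h₁.2.2.2 _ Set.inter_subset_left hne hcl hmaps]
  exact h₂.2.2.2 _ Set.inter_subset_right hne hcl hmaps

lemma aux_sim {Ω : Type*} [TopologicalSpace Ω] [CompactSpace Ω] (φ : Ω → Ω) (hφ : Continuous φ)
    (X : Set Ω) (hX : IsClosed X) (hinv : Set.MapsTo φ X X) (M : Set Ω) (hM : IsMinimalSet φ M)
    (huniq : ∀ M', IsMinimalSet φ M' → M' ⊆ X → M' = M) (S : Set Ω) (hS : S.Finite) :
    S ⊆ X → ∀ U, IsOpen U → M ⊆ U → ∃ n, ∀ s ∈ S, φ^[n] s ∈ U := by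
  induction S, hS using Set.Finite.induction_on with
  | empty => intro _ U _ _; exact ⟨0, by simp⟩
  | @insert a S _ _ ih =>
    intro hSX U hU hMU
    have hent : ∀ y ∈ X, ∃ j, φ^[j] y ∈ U := by
      intro y hy
      have hsub := orbitClosure_subset φ y X hX hinv hy
      obtain ⟨M', hM', hM'sub⟩ := aux_exists_minimal φ (orbitClosure φ y) isClosed_closure
        ⟨y, mem_orbitClosure φ y⟩ (orbitClosure_mapsTo φ hφ y)
      have := huniq M' hM' (hM'sub.trans hsub)
      subst this
      obtain ⟨b, hb⟩ := hM'.1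
      exact aux_visit φ y U hU ⟨b, hMU hb, hM'sub hb⟩
    obtain ⟨T, hT⟩ := hX.isCompact.elim_finite_subcover (fun j : ℕ => φ^[j] ⁻¹' U)
      (fun j => hU.preimage (hφ.iterate j)) (fun y hy => Set.mem_iUnion.2 (hent y hy))
    obtain ⟨n, hn⟩ := ih (fun s hs => hSX (Set.mem_insert_of_mem _ hs))
      (⋂ j ∈ T, φ^[j] ⁻¹' U) (isOpen_biInter_finset fun j _ => hU.preimage (hφ.iterate j))
      (by
        intro b hb
        simp only [Set.mem_iInter]
        intro j _
        exact hMU (hM.2.2.1.iterate j hb))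
    have hy := hT (hinv.iterate n (hSX (Set.mem_insert a S)))
    simp only [Set.mem_iUnion] at hy
    obtain ⟨j, hj, hjy⟩ := hy
    refine ⟨j + n, fun s hs => ?_⟩
    rw [Function.iterate_add_apply]
    rcases hs with rfl | hs
    · exact hjy
    · have := hn s hs
      simp only [Set.mem_iInter] at this
      exact this j hj

lemma aux_upper {Ω : Type*} [MetricSpace Ω] [CompactSpace Ω] [MeasurableSpace Ω]
    [BorelSpace Ω] (φ : Ω → Ω) (hφ : Continuous φ) (htame : Tame φ hφ) (x : C(Ω, ℝ))
    (X : Set Ω) (hX : IsClosed X) (hinv : Set.MapsTo φ X X) (M : Set Ω) (hM : IsMinimalSet φ M)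
    (hMX : M ⊆ X) (huniq : ∀ M', IsMinimalSet φ M' → M' ⊆ X → M' = M) (γ : ℝ)
    (hγ : ∀ ε > 0, ∀ᶠ N in atTop, ∀ b ∈ M, av φ x N b ≤ γ + ε) :
    ∀ ε > 0, ∀ᶠ N in atTop, ∀ b ∈ X, av φ x N b ≤ γ + ε := by
  obtain ⟨c, μ, hμp, hμ, hμX, hub, hc⟩ := aux_M φ hφ x X hX (hM.1.mono hMX) hinv
  suffices hcγ : c ≤ γ by
    intro ε hε
    filter_upwards [hub ε hε] with N hN b hb
    linarith [hN b hb]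
  by_contra hlt
  push Not at hlt
  obtain ⟨β, hβ1, hβ2⟩ := exists_between hlt
  obtain ⟨α, hα1, hα2⟩ := exists_between hβ1
  set D := μ.support with hD
  have hDX : D ⊆ X := Measure.support_subset_of_isClosed hX hμX
  have hDne : D.Nonempty := Measure.nonempty_support (IsProbabilityMeasure.ne_zero μ)
  haveI := hDne.to_subtype
  let s : ℕ → D := TopologicalSpace.denseSeq D
  have hs : DenseRange s := TopologicalSpace.denseRange_denseSeq D
  have hex : ∀ k : ℕ, ∃ N : ℕ, k + 1 ≤ N ∧ ∀ b ∈ M, av φ x N b < α := by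
    intro k
    obtain ⟨N, h1, h2⟩ := ((hγ ((α - γ) / 2) (by linarith)).and (eventually_ge_atTop (k + 1))).exists
    exact ⟨N, h2, fun b hb => by linarith [h1 b hb]⟩
  choose N hNk hNα using hex
  have hex2 : ∀ k : ℕ, ∃ n : ℕ, ∀ i ≤ k, av φ x (N k) (φ^[n] (s i : Ω)) < α := by
    intro k
    obtain ⟨n, hn⟩ := aux_sim φ hφ X hX hinv M hM huniq ((fun i => (s i : Ω)) '' Set.Iic k)
      ((Set.finite_Iic k).image _) (by rintro _ ⟨i, _, rfl⟩; exact hDX (s i).2)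
      {t | av φ x (N k) t < α} (isOpen_lt (av_continuous hφ x.continuous _) continuous_const)
      (fun b hb => hNα k b hb)
    exact ⟨n, fun i hi => hn _ ⟨i, hi, rfl⟩⟩
  choose n hn using hex2
  refine aux_LB φ hφ htame x N n (fun k => by have := hNk k; omega) D hDne hα2 ?_
  intro O hO hOD
  have hO0 : μ O ≠ 0 := by
    obtain ⟨t, htO, htD⟩ := hOD
    exact ((Measure.mem_support_iff_forall t).1 htD O (hO.mem_nhds htO)).ne'
  have h1 := aux_pt φ hφ x X hinv c μ hμ hμX hub hc O hO hO0 D Measure.measure_compl_support hβ2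
  have hNt : Tendsto N atTop atTop :=
    tendsto_atTop_mono (fun k => (Nat.le_succ k).trans (hNk k)) tendsto_id
  obtain ⟨t, htO, htD⟩ := hOD
  obtain ⟨i, hi⟩ := hs.exists_mem_open (hO.preimage continuous_subtype_val) ⟨⟨t, htD⟩, htO⟩
  filter_upwards [hNt.eventually h1, eventually_ge_atTop i] with k hk hik
  exact ⟨hk (n k), s i, ⟨hi, (s i).2⟩, hn k i hik⟩

lemma aux_pointwise {Ω : Type*} [MetricSpace Ω] [CompactSpace Ω] [MeasurableSpace Ω]
    [BorelSpace Ω] (φ : Ω → Ω) (hφ : Continuous φ) (htame : Tame φ hφ)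
    (htrans : ∀ a b c : Ω, Proximal φ a b → Proximal φ b c → Proximal φ a c) (x : C(Ω, ℝ))
    (ω : Ω) : ∃ γ : ℝ, Tendsto (fun N => av φ x N ω) atTop (𝓝 γ) := by
  have hinv := orbitClosure_mapsTo φ hφ ω
  have hX : IsClosed (orbitClosure φ ω) := isClosed_closure
  obtain ⟨M, hM, hMX⟩ := aux_exists_minimal φ (orbitClosure φ ω) hX ⟨ω, mem_orbitClosure φ ω⟩ hinv
  have huniq : ∀ M', IsMinimalSet φ M' → M' ⊆ orbitClosure φ ω → M' = M := by
    intro M' hM' hsub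
    obtain ⟨a, ha, hpa⟩ := aux_ellis φ hφ ω M' hM' hsub
    obtain ⟨b, hb, hpb⟩ := aux_ellis φ hφ ω M hM hMX
    exact aux_min_eq φ M' M hM' hM a b ha hb (htrans _ _ _ (proximal_symm φ _ _ hpa) hpb)
  obtain ⟨γ, hγ⟩ := aux_min_ue φ hφ htame x M hM
  have h1 := aux_upper φ hφ htame x _ hX hinv M hM hMX huniq γ (fun ε hε => by
    filter_upwards [hγ ε hε] with N hN b hb
    linarith [(abs_le.1 (hN b hb)).2])
  have h2 := aux_upper φ hφ htame (-x) _ hX hinv M hM hMX huniq (-γ) (fun ε hε => by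
    filter_upwards [hγ ε hε] with N hN b hb
    rw [av_neg]
    linarith [(abs_le.1 (hN b hb)).1])
  refine ⟨γ, Metric.tendsto_atTop'.2 fun ε hε => ?_⟩
  obtain ⟨K, hK⟩ := eventually_atTop.1 ((h1 (ε / 2) (by linarith)).and (h2 (ε / 2) (by linarith)))
  refine ⟨K, fun N hN => ?_⟩
  obtain ⟨h3, h4⟩ := hK N hN.le
  have h3 := h3 ω (mem_orbitClosure φ ω)
  have h4 := h4 ω (mem_orbitClosure φ ω)
  rw [av_neg] at h4
  rw [Real.dist_eq, abs_lt]
  constructor <;> linarith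

lemma aux_conv_int {Ω : Type*} [MetricSpace Ω] [CompactSpace Ω] [MeasurableSpace Ω]
    [BorelSpace Ω] (φ : Ω → Ω) (hφ : Continuous φ) (htame : Tame φ hφ)
    (htrans : ∀ a b c : Ω, Proximal φ a b → Proximal φ b c → Proximal φ a c) (x : C(Ω, ℝ))
    (ν : Measure Ω) [IsFiniteMeasure ν] :
    ∃ c : ℝ, Tendsto (fun n : ℕ => (n : ℝ)⁻¹ * ∑ j ∈ Finset.range n, ∫ ω, x (φ^[j] ω) ∂ν)
      atTop (𝓝 c) := by
  choose γ hγ using aux_pointwise φ hφ htame htrans x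
  refine ⟨∫ ω, γ ω ∂ν, ?_⟩
  have h := tendsto_integral_of_dominated_convergence (μ := ν) (F := fun N ω => av φ x N ω)
    (f := γ) (fun _ => ‖x‖) (fun N => (av_continuous hφ x.continuous N).aestronglyMeasurable)
    (integrable_const _) (fun N => Eventually.of_forall fun ω => av_abs_le φ x N ω)
    (Eventually.of_forall hγ)
  refine h.congr fun N => ?_
  unfold av
  rw [integral_const_mul, integral_finset_sum]
  intro i _
  exact aux_intg ν (x.continuous.comp (hφ.iterate i))

variable {Ω : Type*} [MetricSpace Ω] [CompactSpace Ω] [Nonempty Ω]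
  [MeasurableSpace Ω] [BorelSpace Ω]

/-- Proposition 3.9 (second part): for a tame semicascade with transitive proximality
relation, the Cesàro means `(1/n) Σ_{j<n} ∫ x ∘ φ^j dμ` converge as `n → ∞` for every
`x ∈ C(Ω,ℝ)` and every finite signed Borel measure `μ`. -/
theorem stmt_19 (φ : Ω → Ω) (hφ : Continuous φ) (htame : Tame φ hφ)
    (htrans : ∀ a b c : Ω, Proximal φ a b → Proximal φ b c → Proximal φ a c) :
    ∀ (x : C(Ω, ℝ)) (μ : SignedMeasure Ω), ∃ c : ℝ,
      Tendsto (fun n : ℕ => (n : ℝ)⁻¹ * ∑ j ∈ Finset.range n, spair (fun ω => x (φ^[j] ω)) μ)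
        atTop (𝓝 c) := by
  intro x μ
  obtain ⟨c₁, h₁⟩ := aux_conv_int φ hφ htame htrans x μ.toJordanDecomposition.posPart
  obtain ⟨c₂, h₂⟩ := aux_conv_int φ hφ htame htrans x μ.toJordanDecomposition.negPart
  refine ⟨c₁ - c₂, (h₁.sub h₂).congr fun n => ?_⟩
  simp only [spair]
  rw [← mul_sub, ← Finset.sum_sub_distrib]
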